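/- Under the stated assumptions, for every η ∈ V' one has p*(η) = p*(η − η ∘ Π̂) and C_poi⁻¹ · p*(η) ≤ ‖η − η ∘ Π̂‖_{V'} ≤ p*(η), where ‖·‖_{V'} denotes the operator norm on the dual and η ∘ Π̂ ∈ V' is the composition of η with Π̂. -/

import Mathlib

/-!
For `v ∈ V`, the vector `v - Π̂ v` lies in `ker Π̂` and `p (v - Π̂ v) ≤ p v`, since `p` vanishes on
the range of `Π̂`. Hence `|(η - η ∘ Π̂) v| = |η (v - Π̂ v)| ≤ p*(η) p v ≤ p*(η) ‖v‖`, which is the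
upper bound on the operator norm. Conversely `η` and `η - η ∘ Π̂` agree on `ker Π̂`, so they have
the same dual seminorm, which the Poincaré inequality bounds by `C_poi ‖η - η ∘ Π̂‖`.
-/

section Algebraic

variable {V : Type*} [AddCommGroup V] [Module ℝ V] {p : Seminorm ℝ V} {K : Submodule ℝ V}
  {η ξ : Module.Dual ℝ V} {M : ℝ}

/-- The dual seminorm of `p` computed against a subspace `K`: the supremum of `η v / p v` over the
`v ∈ K` with `p v ≠ 0`. As a real supremum, it is `0` if there are no such `v`, and also if the
quotients are unbounded. -/
noncomputable def dualSeminorm (p : Seminorm ℝ V) (K : Submodule ℝ V) (η : Module.Dual ℝ V) : ℝ :=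
  sSup ((fun v => η v / p v) '' {v | v ∈ K ∧ p v ≠ 0})

theorem dualSeminorm_eq_sSup_ne_zero (hK : ∀ v ∈ K, p v = 0 → v = 0) (η : Module.Dual ℝ V) :
    dualSeminorm p K η = sSup ((fun v => η v / p v) '' {v | v ∈ K ∧ v ≠ 0}) := by
  have hset : {v | v ∈ K ∧ p v ≠ 0} = {v | v ∈ K ∧ v ≠ 0} :=
    Set.ext fun v => and_congr_right fun hv =>
      not_congr ⟨hK v hv, fun h => h ▸ map_zero p⟩
  rw [dualSeminorm, hset]

theorem dualSeminorm_congr (h : ∀ v ∈ K, η v = ξ v) : dualSeminorm p K η = dualSeminorm p K ξ :=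
  congrArg sSup (Set.image_congr fun v hv => by rw [h v hv.1])

theorem dualSeminorm_le (hM : 0 ≤ M) (h : ∀ v ∈ K, η v ≤ M * p v) : dualSeminorm p K η ≤ M := by
  refine Real.sSup_le ?_ hM
  rintro _ ⟨v, ⟨hv, -⟩, rfl⟩
  exact div_le_of_le_mul₀ (apply_nonneg p v) hM (h v hv)

theorem apply_le_dualSeminorm_mul (h : ∀ v ∈ K, η v ≤ M * p v) {v : V} (hv : v ∈ K) :
    η v ≤ dualSeminorm p K η * p v := by
  by_cases hpv : p v = 0
  · simpa [hpv] using h v hv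
  have hpos {w : V} (hw : p w ≠ 0) : 0 < p w := (apply_nonneg p w).lt_of_ne' hw
  have hbdd : BddAbove ((fun v => η v / p v) '' {v | v ∈ K ∧ p v ≠ 0}) := by
    refine ⟨M, ?_⟩
    rintro _ ⟨w, ⟨hw, hpw⟩, rfl⟩
    exact (div_le_iff₀ (hpos hpw)).2 (h w hw)
  exact (div_le_iff₀ (hpos hpv)).1 (le_csSup hbdd ⟨v, ⟨hv, hpv⟩, rfl⟩)

theorem abs_apply_le_dualSeminorm_mul (h : ∀ v ∈ K, η v ≤ M * p v) {v : V} (hv : v ∈ K) :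
    |η v| ≤ dualSeminorm p K η * p v :=
  abs_le'.2 ⟨apply_le_dualSeminorm_mul h hv,
    by simpa using apply_le_dualSeminorm_mul h (K.neg_mem hv)⟩

theorem dualSeminorm_nonneg (p : Seminorm ℝ V) (K : Submodule ℝ V) (η : Module.Dual ℝ V) :
    0 ≤ dualSeminorm p K η := by
  by_cases h : ∃ v ∈ K, p v ≠ 0
  · obtain ⟨v, hv, hpv⟩ := h
    rcases le_total 0 (η v) with hη | hη
    · exact Real.sSup_nonneg' ⟨_, ⟨v, ⟨hv, hpv⟩, rfl⟩, div_nonneg hη (apply_nonneg p v)⟩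
    · refine Real.sSup_nonneg' ⟨_, ⟨-v, ⟨K.neg_mem hv, by simpa using hpv⟩, rfl⟩, ?_⟩
      exact div_nonneg (by simpa using hη) (apply_nonneg p (-v))
  · refine Real.sSup_nonneg ?_
    rintro _ ⟨v, hv, rfl⟩
    exact absurd ⟨v, hv⟩ h

end Algebraic

section Normed

variable {V : Type*} [SeminormedAddCommGroup V] [NormedSpace ℝ V] {p : Seminorm ℝ V} {C : ℝ}

theorem apply_le_mul_opNorm_mul {K : Submodule ℝ V} (hK : ∀ v ∈ K, ‖v‖ ≤ C * p v)
    (η : V →L[ℝ] ℝ) {v : V} (hv : v ∈ K) : η v ≤ C * ‖η‖ * p v :=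
  calc η v ≤ ‖η‖ * ‖v‖ := (Real.le_norm_self _).trans (η.le_opNorm v)
    _ ≤ ‖η‖ * (C * p v) := by gcongr; exact hK v hv
    _ = C * ‖η‖ * p v := by ring

theorem dualSeminorm_le_mul_opNorm {K : Submodule ℝ V} (hC : 0 ≤ C)
    (hK : ∀ v ∈ K, ‖v‖ ≤ C * p v) (η : V →L[ℝ] ℝ) : dualSeminorm p K η ≤ C * ‖η‖ :=
  dualSeminorm_le (by positivity) fun _ => apply_le_mul_opNorm_mul hK η

theorem opNorm_sub_comp_le_dualSeminorm (hp : ∀ v, p v ≤ ‖v‖) {P : V →L[ℝ] V}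
    (hP : ∀ v, P (P v) = P v) (hpP : ∀ v, p (P v) = 0) (hker : ∀ v ∈ P.ker, ‖v‖ ≤ C * p v)
    (η : V →L[ℝ] ℝ) : ‖η - η.comp P‖ ≤ dualSeminorm p P.ker η := by
  have hnonneg : 0 ≤ dualSeminorm p P.ker η := dualSeminorm_nonneg p P.ker η
  refine ContinuousLinearMap.opNorm_le_bound _ hnonneg fun v => ?_
  have hmem : v - P v ∈ P.ker := by simp [hP]
  have hsub : p (v - P v) ≤ p v := by simpa [hpP v] using map_sub_le_add p v (P v)
  calc ‖(η - η.comp P) v‖ = |η (v - P v)| := by simp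
    _ ≤ dualSeminorm p P.ker η * p (v - P v) :=
      abs_apply_le_dualSeminorm_mul (fun _ => apply_le_mul_opNorm_mul hker η) hmem
    _ ≤ dualSeminorm p P.ker η * p v := by gcongr
    _ ≤ dualSeminorm p P.ker η * ‖v‖ := by gcongr; exact hp v

theorem dual_seminorm_projection_equivalence_general (hp : ∀ v, p v ≤ ‖v‖) {P : V →L[ℝ] V}
    (hP : ∀ v, P (P v) = P v) (hpP : ∀ v, p (P v) = 0) (hC : 0 < C)
    (hker : ∀ v ∈ P.ker, ‖v‖ ≤ C * p v) (η : V →L[ℝ] ℝ) :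
    dualSeminorm p P.ker η = dualSeminorm p P.ker ↑(η - η.comp P) ∧
      C⁻¹ * dualSeminorm p P.ker η ≤ ‖η - η.comp P‖ ∧
      ‖η - η.comp P‖ ≤ dualSeminorm p P.ker η := by
  have heq : dualSeminorm p P.ker η = dualSeminorm p P.ker ↑(η - η.comp P) :=
    dualSeminorm_congr fun v hv => by simp [show P v = 0 from hv]
  refine ⟨heq, ?_, opNorm_sub_comp_le_dualSeminorm hp hP hpP hker η⟩
  rw [inv_mul_le_iff₀ hC, heq]
  exact dualSeminorm_le_mul_opNorm hC.le hker _

end Normed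

/-- With `p*` the dual seminorm of `p` (computed by duality
against `ker Π̂`), for every `η ∈ V'` one has `p*(η) = p*(η − η ∘ Π̂)` and
`C_poi⁻¹ · p*(η) ≤ ‖η − η ∘ Π̂‖_{V'} ≤ p*(η)`. -/
theorem dual_seminorm_projection_equivalence
    {V : Type*} [NormedAddCommGroup V] [InnerProductSpace ℝ V] [CompleteSpace V]
    (p : Seminorm ℝ V) (hple : ∀ v : V, p v ≤ ‖v‖)
    (Pih : V →L[ℝ] V) (hidem : ∀ v : V, Pih (Pih v) = Pih v)
    (hrange : ∀ v : V, p v = 0 ↔ ∃ u : V, Pih u = v)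
    (Cpoi : ℝ) (hCpoi : 0 < Cpoi)
    (hpoincare : ∀ v : V, Pih v = 0 → ‖v‖ ≤ Cpoi * p v)
    (pstar : (V →L[ℝ] ℝ) → ℝ)
    (hpstar : ∀ η : V →L[ℝ] ℝ,
      pstar η = sSup ((fun v => η v / p v) '' {v : V | Pih v = 0 ∧ v ≠ 0})) :
    ∀ η : V →L[ℝ] ℝ, pstar η = pstar (η - η.comp Pih) ∧
      Cpoi⁻¹ * pstar η ≤ ‖η - η.comp Pih‖ ∧ ‖η - η.comp Pih‖ ≤ pstar η := by
  have hdef (v : V) (hv : v ∈ Pih.ker) (hpv : p v = 0) : v = 0 :=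
    norm_le_zero_iff.1 (by simpa [hpv] using hpoincare v hv)
  have hpstar_eq (η : V →L[ℝ] ℝ) : pstar η = dualSeminorm p Pih.ker η :=
    (hpstar η).trans (dualSeminorm_eq_sSup_ne_zero hdef (η : V →ₗ[ℝ] ℝ)).symm
  simpa only [hpstar_eq] using dual_seminorm_projection_equivalence_general hple hidem
    (fun v => (hrange _).2 ⟨v, rfl⟩) hCpoi hpoincare
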